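/- Let p, q > 1 and 0 < a ≤ b ≤ 1. Then arcsin_{p,q} is (a,b)-convex on (0,1): for all r, s ∈ (0,1), arcsin_{p,q}(((r^a + s^a)/2)^{1/a}) ≤ ((arcsin_{p,q}(r)^b + arcsin_{p,q}(s)^b)/2)^{1/b}. -/

import Mathlib

open Real Set

/-- `arcsinPQ p q x = ∫₀ˣ (1 - tᵠ)^(-1/p) dt`, the generalized inverse sine. -/
noncomputable def arcsinPQ (p q x : ℝ) : ℝ := ∫ t in (0:ℝ)..x, (1 - t ^ q) ^ (-(1/p))

/-!
For `f > 0` on an interval of positive reals, `(a, b)`-convexity with `b > 0` is midpoint convexity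
of `u ↦ f (u ^ (1/a)) ^ b`. With `x = u ^ (1/a)` the derivative of this function is
`(b/a) * E x * (f x / x) ^ b * x ^ (b - a)`, where `E x = x * f' x / f x` is the elasticity of `f`.
When `E` is increasing and at least `1`, the quotient `f x / x` increases as well, so for `a ≤ b`
the derivative is monotone in `u`, whatever the sign of `a`.

For `f x = ∫₀ˣ g` one has `1 / E x = ∫₀¹ g (t * x) / g x dt`. This is at most `1` if `g` increases,
and it decreases in `x` if `log g` is a convex function of `log x`. Both hold for
`g x = (1 - x ^ q) ^ (-1/p)`.
-/

open MeasureTheory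

/-- The power mean `M_a(x, y)` of two positive reals, for an exponent `a ≠ 0`. -/
noncomputable def powerMean (a x y : ℝ) : ℝ := ((x ^ a + y ^ a) / 2) ^ (1 / a)

/-- `(a, b)`-convexity of `f` on `I`: the image under `f` of the power mean of exponent `a` is at
most the power mean of exponent `b` of the images. It is meant for nonzero `a` and `b`, and for
positive `f` on a set `I` of positive reals. -/
def PowerConvexOn (a b : ℝ) (I : Set ℝ) (f : ℝ → ℝ) : Prop :=
  ∀ x ∈ I, ∀ y ∈ I, f (powerMean a x y) ≤ powerMean b (f x) (f y)

section PowerConvexity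

variable {a b : ℝ} {I : Set ℝ} {f f' : ℝ → ℝ}

theorem PowerConvexOn.of_convexOn_comp_rpow (ha : a ≠ 0) (hb : 0 < b) (hI : I ⊆ Ioi 0)
    (hf : ∀ x ∈ I, 0 ≤ f x)
    (hconv : ConvexOn ℝ ((· ^ a) '' I) fun u => f (u ^ a⁻¹) ^ b) : PowerConvexOn a b I f := by
  intro x hx y hy
  have hroot : ∀ z ∈ I, (z ^ a) ^ a⁻¹ = z := fun z hz => rpow_rpow_inv (hI hz).le ha
  have half_smul_add (u v : ℝ) : (1 / 2 : ℝ) • u + (1 / 2 : ℝ) • v = (u + v) / 2 := by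
    simp only [smul_eq_mul]; ring
  have hxa := mem_image_of_mem (· ^ a) hx
  have hya := mem_image_of_mem (· ^ a) hy
  obtain ⟨z, hz, hz_eq⟩ := hconv.1 hxa hya one_half_pos.le one_half_pos.le (add_halves 1)
  have hmid := hconv.2 hxa hya one_half_pos.le one_half_pos.le (add_halves 1)
  simp only [half_smul_add] at hz_eq hmid
  rw [← hz_eq, hroot x hx, hroot y hy, hroot z hz] at hmid
  have hfx := hf x hx
  have hfy := hf y hy
  rw [powerMean, powerMean, ← hz_eq, one_div, one_div, hroot z hz]
  exact (le_rpow_inv_iff_of_pos (hf z hz) (by positivity) hb).2 hmid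

theorem monotoneOn_div_id_of_le_mul_deriv (hI : I ⊆ Ioi 0) (hconn : I.OrdConnected)
    (hf : ∀ x ∈ I, HasDerivAt f (f' x) x) (hle : ∀ x ∈ I, f x ≤ x * f' x) :
    MonotoneOn (fun x => f x / x) I := by
  have hderiv : ∀ x ∈ I, HasDerivAt (fun x => f x / x) ((f' x * x - f x * 1) / x ^ 2) x :=
    fun x hx => (hf x hx).div (hasDerivAt_id x) (hI hx).ne'
  refine monotoneOn_of_hasDerivWithinAt_nonneg hconn.convex
    (fun x hx => (hderiv x hx).continuousAt.continuousWithinAt)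
    (fun x hx => (hderiv x (interior_subset hx)).hasDerivWithinAt) fun x hx => ?_
  have := hle x (interior_subset hx)
  exact div_nonneg (by linarith) (sq_nonneg x)

theorem hasDerivAt_comp_rpow_inv_rpow {x y' : ℝ} (ha : a ≠ 0) (hx : 0 < x) (hfx : 0 < f x)
    (hf : HasDerivAt f y' x) :
    HasDerivAt (fun u => f (u ^ a⁻¹) ^ b)
      (b / a * (x * y' / f x * ((f x / x) ^ b * x ^ (b - a)))) (x ^ a) := by
  have hroot : (x ^ a) ^ a⁻¹ = x := rpow_rpow_inv hx.le ha
  have hinner : HasDerivAt (· ^ a⁻¹) (a⁻¹ * (x ^ a) ^ (a⁻¹ - 1)) (x ^ a) :=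
    hasDerivAt_rpow_const (Or.inl (rpow_pos_of_pos hx a).ne')
  have hcomp := (HasDerivAt.comp (x ^ a) (hroot.symm ▸ hf) hinner).rpow_const (p := b)
    (Or.inl (by simpa only [Function.comp_apply, hroot] using hfx.ne'))
  refine hcomp.congr_deriv ?_
  simp only [Function.comp_apply]
  rw [rpow_sub_one (rpow_pos_of_pos hx a).ne', hroot, rpow_sub_one hfx.ne',
    div_rpow hfx.le hx.le, rpow_sub hx]
  field_simp

theorem monotoneOn_elasticity_mul_rpow_mul_rpow (hab : a ≤ b) (hb : 0 ≤ b) (hI : I ⊆ Ioi 0)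
    (hconn : I.OrdConnected) (hf : ∀ x ∈ I, HasDerivAt f (f' x) x) (hnonneg : ∀ x ∈ I, 0 ≤ f x)
    (hle : ∀ x ∈ I, f x ≤ x * f' x) (helast : MonotoneOn (fun x => x * f' x / f x) I) :
    MonotoneOn (fun x => x * f' x / f x * ((f x / x) ^ b * x ^ (b - a))) I := by
  have hquot_nonneg : ∀ x ∈ I, 0 ≤ f x / x := fun x hx => div_nonneg (hnonneg x hx) (hI hx).le
  have hquot : MonotoneOn (fun x => (f x / x) ^ b) I := fun x hx y hy hxy =>
    rpow_le_rpow (hquot_nonneg x hx)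
      (monotoneOn_div_id_of_le_mul_deriv hI hconn hf hle hx hy hxy) hb
  have hpow : MonotoneOn (fun x : ℝ => x ^ (b - a)) I := fun x hx y _ hxy =>
    rpow_le_rpow (hI hx).le hxy (sub_nonneg.2 hab)
  exact helast.mul
    (hquot.mul hpow (fun x hx => rpow_nonneg (hquot_nonneg x hx) b)
      fun x hx => rpow_nonneg (hI hx).le _)
    (fun x hx => div_nonneg ((hnonneg x hx).trans (hle x hx)) (hnonneg x hx))
    fun x hx => mul_nonneg (rpow_nonneg (hquot_nonneg x hx) b) (rpow_nonneg (hI hx).le _)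

theorem PowerConvexOn.of_monotoneOn_elasticity (ha : a ≠ 0) (hab : a ≤ b) (hb : 0 < b)
    (hI : I ⊆ Ioi 0) (hconn : I.OrdConnected) (hf : ∀ x ∈ I, HasDerivAt f (f' x) x)
    (hpos : ∀ x ∈ I, 0 < f x) (hle : ∀ x ∈ I, f x ≤ x * f' x)
    (helast : MonotoneOn (fun x => x * f' x / f x) I) : PowerConvexOn a b I f := by
  have hderiv := fun x hx =>
    hasDerivAt_comp_rpow_inv_rpow (b := b) ha (hI hx) (hpos x hx) (hf x hx)
  have hmono := monotoneOn_elasticity_mul_rpow_mul_rpow hab hb.le hI hconn hf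
    (fun x hx => (hpos x hx).le) hle helast
  have hconvex : Convex ℝ ((· ^ a) '' I) :=
    (hconn.isPreconnected.image _ fun x hx =>
      (continuousAt_rpow_const x a (Or.inl (hI hx).ne')).continuousWithinAt).ordConnected.convex
  refine .of_convexOn_comp_rpow ha hb hI (fun x hx => (hpos x hx).le) <|
    MonotoneOn.convexOn_of_deriv hconvex ?_ ?_ ?_
  · rintro _ ⟨x, hx, rfl⟩
    exact (hderiv x hx).continuousAt.continuousWithinAt
  · intro u hu
    obtain ⟨x, hx, rfl⟩ := interior_subset hu
    exact (hderiv x hx).differentiableAt.differentiableWithinAt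
  · intro u hu v hv huv
    obtain ⟨x, hx, rfl⟩ := interior_subset hu
    obtain ⟨y, hy, rfl⟩ := interior_subset hv
    rw [(hderiv x hx).deriv, (hderiv y hy).deriv]
    rcases ha.lt_or_gt with ha_neg | ha_pos
    · have hyx : y ≤ x := (rpow_le_rpow_iff_of_neg (hI hx) (hI hy) ha_neg).1 huv
      exact mul_le_mul_of_nonpos_left (hmono hy hx hyx)
        (div_nonpos_of_nonneg_of_nonpos hb.le ha_neg.le)
    · have hxy : x ≤ y := (rpow_le_rpow_iff (hI hx).le (hI hy).le ha_pos).1 huv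
      exact mul_le_mul_of_nonneg_left (hmono hx hy hxy) (by positivity)

end PowerConvexity

section Primitive

variable {g : ℝ → ℝ} {R x : ℝ}

theorem intervalIntegrable_zero_of_continuousOn_Ico (hg : ContinuousOn g (Ico 0 R))
    (hx : x ∈ Ioo 0 R) : IntervalIntegrable g volume 0 x :=
  (hg.mono (Icc_subset_Ico_right hx.2)).intervalIntegrable_of_Icc hx.1.le

theorem hasDerivAt_integral_zero (hg : ContinuousOn g (Ico 0 R)) (hx : x ∈ Ioo 0 R) :
    HasDerivAt (fun x => ∫ t in (0 : ℝ)..x, g t) (g x) x := by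
  have hg' : ContinuousOn g (Ioo 0 R) := hg.mono Ioo_subset_Ico_self
  exact intervalIntegral.integral_hasDerivAt_right
    (intervalIntegrable_zero_of_continuousOn_Ico hg hx)
    (hg'.stronglyMeasurableAtFilter isOpen_Ioo x hx) (hg'.continuousAt (isOpen_Ioo.mem_nhds hx))

theorem integral_zero_pos (hg : ContinuousOn g (Ico 0 R)) (hpos : ∀ t ∈ Ioo 0 R, 0 < g t)
    (hx : x ∈ Ioo 0 R) : 0 < ∫ t in (0 : ℝ)..x, g t :=
  intervalIntegral.intervalIntegral_pos_of_pos_on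
    (intervalIntegrable_zero_of_continuousOn_Ico hg hx)
    (fun t ht => hpos t ⟨ht.1, ht.2.trans hx.2⟩) hx.1

theorem integral_zero_le_mul (hg : ContinuousOn g (Ico 0 R)) (hmono : MonotoneOn g (Ioo 0 R))
    (hx : x ∈ Ioo 0 R) : ∫ t in (0 : ℝ)..x, g t ≤ x * g x :=
  calc ∫ t in (0 : ℝ)..x, g t
      ≤ ∫ _ in (0 : ℝ)..x, g x :=
        intervalIntegral.integral_mono_on_of_le_Ioo hx.1.le
          (intervalIntegrable_zero_of_continuousOn_Ico hg hx) intervalIntegrable_const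
          fun t ht => hmono ⟨ht.1, ht.2.trans hx.2⟩ hx ht.2.le
    _ = x * g x := by simp

theorem mul_div_integral_zero_eq_inv (hx : x ≠ 0) :
    x * g x / ∫ t in (0 : ℝ)..x, g t = (∫ t in (0 : ℝ)..1, g (t * x) / g x)⁻¹ := by
  rw [intervalIntegral.integral_div, intervalIntegral.integral_comp_mul_right g hx, zero_mul,
    one_mul, smul_eq_mul, inv_div]
  field_simp

theorem monotoneOn_mul_div_integral_zero (hg : ContinuousOn g (Ico 0 R))
    (hpos : ∀ t ∈ Ioo 0 R, 0 < g t)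
    (hratio : ∀ t ∈ Ioo (0 : ℝ) 1, AntitoneOn (fun x => g (t * x) / g x) (Ioo 0 R)) :
    MonotoneOn (fun x => x * g x / ∫ t in (0 : ℝ)..x, g t) (Ioo 0 R) := by
  intro x hx y hy hxy
  have hint : ∀ z ∈ Ioo 0 R, IntervalIntegrable (fun t => g (t * z) / g z) volume 0 1 := by
    intro z hz
    refine ContinuousOn.intervalIntegrable_of_Icc zero_le_one ?_
    refine (hg.comp (continuous_mul_const z).continuousOn fun t ht => ?_).div_const _
    exact ⟨mul_nonneg ht.1 hz.1.le, (mul_le_of_le_one_left hz.1.le ht.2).trans_lt hz.2⟩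
  have hinv_pos : 0 < ∫ t in (0 : ℝ)..1, g (t * y) / g y := by
    rw [← inv_pos, ← mul_div_integral_zero_eq_inv hy.1.ne']
    exact div_pos (mul_pos hy.1 (hpos y hy)) (integral_zero_pos hg hpos hy)
  simp only [mul_div_integral_zero_eq_inv hx.1.ne', mul_div_integral_zero_eq_inv hy.1.ne']
  exact inv_anti₀ hinv_pos <| intervalIntegral.integral_mono_on_of_le_Ioo zero_le_one
    (hint y hy) (hint x hx) fun t ht => hratio t ht hx hy hxy

theorem powerConvexOn_integral_zero {a b : ℝ} (ha : a ≠ 0) (hab : a ≤ b) (hb : 0 < b)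
    (hg : ContinuousOn g (Ico 0 R)) (hpos : ∀ t ∈ Ioo 0 R, 0 < g t)
    (hmono : MonotoneOn g (Ioo 0 R))
    (hratio : ∀ t ∈ Ioo (0 : ℝ) 1, AntitoneOn (fun x => g (t * x) / g x) (Ioo 0 R)) :
    PowerConvexOn a b (Ioo 0 R) fun x => ∫ t in (0 : ℝ)..x, g t :=
  .of_monotoneOn_elasticity ha hab hb Ioo_subset_Ioi_self ordConnected_Ioo
    (fun _ hx => hasDerivAt_integral_zero hg hx) (fun _ hx => integral_zero_pos hg hpos hx)
    (fun _ hx => integral_zero_le_mul hg hmono hx)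
    (monotoneOn_mul_div_integral_zero hg hpos hratio)

end Primitive

section Integrand

variable {q e : ℝ}

theorem one_sub_rpow_pos {x : ℝ} (hq : 0 < q) (hx : x ∈ Ico (0 : ℝ) 1) : 0 < 1 - x ^ q :=
  sub_pos.2 (rpow_lt_one hx.1 hx.2 hq)

theorem continuousOn_one_sub_rpow_rpow (hq : 0 < q) :
    ContinuousOn (fun x : ℝ => (1 - x ^ q) ^ e) (Ico 0 1) :=
  (continuousOn_const.sub (continuous_rpow_const hq.le).continuousOn).rpow_const
    fun _ hx => Or.inl (one_sub_rpow_pos hq hx).ne'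

theorem monotoneOn_one_sub_rpow_rpow (hq : 0 < q) (he : e ≤ 0) :
    MonotoneOn (fun x : ℝ => (1 - x ^ q) ^ e) (Ico 0 1) := fun _ hx _ hy hxy =>
  rpow_le_rpow_of_nonpos (one_sub_rpow_pos hq hy)
    (sub_le_sub_left (rpow_le_rpow hx.1 hxy hq.le) 1) he

theorem antitoneOn_one_sub_rpow_rpow_ratio {t : ℝ} (hq : 0 < q) (he : e ≤ 0)
    (ht : t ∈ Icc (0 : ℝ) 1) :
    AntitoneOn (fun x : ℝ => (1 - (t * x) ^ q) ^ e / (1 - x ^ q) ^ e) (Ico 0 1) := by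
  have scaled_mem {x : ℝ} (hx : x ∈ Ico (0 : ℝ) 1) : t * x ∈ Ico (0 : ℝ) 1 :=
    ⟨mul_nonneg ht.1 hx.1, (mul_le_of_le_one_left hx.1 ht.2).trans_lt hx.2⟩
  intro x hx y hy hxy
  have hx_pos := one_sub_rpow_pos hq hx
  have hy_pos := one_sub_rpow_pos hq hy
  have htx_pos := one_sub_rpow_pos hq (scaled_mem hx)
  have hty_pos := one_sub_rpow_pos hq (scaled_mem hy)
  have hbase : (1 - (t * x) ^ q) / (1 - x ^ q) ≤ (1 - (t * y) ^ q) / (1 - y ^ q) := by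
    rw [div_le_div_iff₀ hx_pos hy_pos, mul_rpow ht.1 hx.1, mul_rpow ht.1 hy.1]
    have htq : t ^ q ≤ 1 := rpow_le_one ht.1 ht.2 hq.le
    have hxyq : x ^ q ≤ y ^ q := rpow_le_rpow hx.1 hxy hq.le
    linarith [mul_nonneg (sub_nonneg.2 htq) (sub_nonneg.2 hxyq)]
  simp only [← div_rpow htx_pos.le hx_pos.le, ← div_rpow hty_pos.le hy_pos.le]
  exact rpow_le_rpow_of_nonpos (div_pos htx_pos hx_pos) hbase he

end Integrand

theorem arcsinPQ_ab_convex_pos_general {p q a b : ℝ} (hp : 0 < p) (hq : 0 < q) (ha : a ≠ 0)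
    (hab : a ≤ b) (hb : 0 < b) : PowerConvexOn a b (Ioo 0 1) (arcsinPQ p q) := by
  have he : -(1 / p) ≤ 0 := neg_nonpos.2 (one_div_pos.2 hp).le
  exact powerConvexOn_integral_zero ha hab hb (continuousOn_one_sub_rpow_rpow hq)
    (fun t ht => rpow_pos_of_pos (one_sub_rpow_pos hq (Ioo_subset_Ico_self ht)) _)
    ((monotoneOn_one_sub_rpow_rpow hq he).mono Ioo_subset_Ico_self)
    fun t ht => (antitoneOn_one_sub_rpow_rpow_ratio hq he (Ioo_subset_Icc_self ht)).mono
      Ioo_subset_Ico_self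

theorem arcsinPQ_ab_convex_pos (p q a b : ℝ) (hp : 1 < p) (hq : 1 < q)
    (ha : 0 < a) (hab : a ≤ b) (hb : b ≤ 1)
    (r s : ℝ) (hr : r ∈ Set.Ioo (0:ℝ) 1) (hs : s ∈ Set.Ioo (0:ℝ) 1) :
    arcsinPQ p q (((r ^ a + s ^ a) / 2) ^ (1/a)) ≤
      ((arcsinPQ p q r ^ b + arcsinPQ p q s ^ b) / 2) ^ (1/b) :=
  arcsinPQ_ab_convex_pos_general (zero_lt_one.trans hp) (zero_lt_one.trans hq) ha.ne' hab
    (ha.trans_le hab) r hr s hs
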